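/- Let s > −1, let b be a bounded measurable function on the unit ball B_N, and let h be continuous on the closed ball \overline{B_N}. Then T_b T_h − T_{bh} is a compact operator on the weighted Bergman space A^2_s(B_N). -/

import Mathlib

open Filter MeasureTheory Metric Set
open scoped ComplexInnerProductSpace Topology

noncomputable section

/-- Borel measurable structure on `ℂ^N`. -/
instance (N : ℕ) : MeasurableSpace (EuclideanSpace ℂ (Fin N)) := borel _

instance (N : ℕ) : BorelSpace (EuclideanSpace ℂ (Fin N)) := ⟨rfl⟩

/-- The open unit ball `B_N` of `ℂ^N`. -/
abbrev Ball (N : ℕ) : Set (EuclideanSpace ℂ (Fin N)) := Metric.ball 0 1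

/-- The normalized volume measure `v` on the unit ball of `ℂ^N`. -/
def ballMeasure (N : ℕ) : Measure (EuclideanSpace ℂ (Fin N)) :=
  (volume (Ball N))⁻¹ • volume.restrict (Ball N)

/-- The normalized surface measure `σ` on the unit sphere `∂B_N`, realized as a measure on
`ℂ^N` (supported on the sphere): it is the push-forward of the normalized volume measure of
the ball under the radial projection `z ↦ z/‖z‖`. -/
def sphereMeasure (N : ℕ) : Measure (EuclideanSpace ℂ (Fin N)) :=
  Measure.map (fun z => ‖z‖⁻¹ • z) (ballMeasure N)

/-- The weighted measure `dv_s(z) = (Γ(N+s+1)/(N! Γ(s+1))) (1-|z|²)^s dv(z)` defining the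
weighted Bergman space `A²_s(B_N)`. -/
def bergmanMeasure (N : ℕ) (s : ℝ) : Measure (EuclideanSpace ℂ (Fin N)) :=
  (ballMeasure N).withDensity fun z =>
    ENNReal.ofReal (Real.Gamma (N + s + 1) / (Nat.factorial N * Real.Gamma (s + 1))
      * (1 - ‖z‖ ^ 2) ^ s)

/-- An abstract presentation of the Hardy space `H²(B_N)` (for `t = N`, `μ` the normalized
surface measure on the sphere) or of the weighted Bergman space `A²_s(B_N)` (for
`t = N + s + 1`, `μ` the weighted volume measure `dv_s`): a reproducing-kernel Hilbert space
of holomorphic functions on `B_N` with kernel `K_w(z) = (1 - ⟨z,w⟩)^{-t}`, whose inner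
product is computed by the (dilated) integral pairing against `μ`. -/
structure BallFunctionSpace (N : ℕ) (t : ℝ) (μ : Measure (EuclideanSpace ℂ (Fin N))) where
  (H : Type)
  [grp : NormedAddCommGroup H]
  [ips : InnerProductSpace ℂ H]
  [cpl : CompleteSpace H]
  eval : H → EuclideanSpace ℂ (Fin N) → ℂ
  eval_add : ∀ f g : H, ∀ z, eval (f + g) z = eval f z + eval g z
  eval_smul : ∀ (c : ℂ) (f : H) (z : EuclideanSpace ℂ (Fin N)), eval (c • f) z = c * eval f z
  holo : ∀ f : H, DifferentiableOn ℂ (eval f) (Ball N)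
  eval_injective : ∀ f g : H, (∀ z ∈ Ball N, eval f z = eval g z) → f = g
  kernel : EuclideanSpace ℂ (Fin N) → H
  eval_kernel : ∀ w ∈ Ball N, ∀ z ∈ Ball N, eval (kernel w) z = (1 - ⟪w, z⟫) ^ (-(t : ℂ))
  reproducing : ∀ (f : H), ∀ w ∈ Ball N, ⟪kernel w, f⟫ = eval f w
  inner_eq : ∀ f g : H,
    Tendsto (fun r : ℝ => ∫ z, (starRingEnd ℂ) (eval f (r • z)) * eval g (r • z) ∂μ)
      (𝓝[<] (1 : ℝ)) (𝓝 ⟪f, g⟫)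

attribute [instance] BallFunctionSpace.grp BallFunctionSpace.ips BallFunctionSpace.cpl

/-- `T` is the composition operator `C_φ : f ↦ f ∘ φ` on `S`. -/
def BallFunctionSpace.IsCompositionOperator {N : ℕ} {t : ℝ}
    {μ : Measure (EuclideanSpace ℂ (Fin N))} (S : BallFunctionSpace N t μ)
    (φ : EuclideanSpace ℂ (Fin N) → EuclideanSpace ℂ (Fin N)) (T : S.H →L[ℂ] S.H) : Prop :=
  ∀ f : S.H, ∀ z ∈ Ball N, S.eval (T f) z = S.eval f (φ z)

/-- `T` is the Toeplitz operator `T_b : u ↦ P(b·u)` with symbol `b` on `S`;  equivalently,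
`⟪v, T u⟫ = lim_{r→1⁻} ∫ conj(v(rz)) b(z) u(rz) dμ(z)` for all `u, v ∈ S`. -/
def BallFunctionSpace.IsToeplitzOperator {N : ℕ} {t : ℝ}
    {μ : Measure (EuclideanSpace ℂ (Fin N))} (S : BallFunctionSpace N t μ)
    (b : EuclideanSpace ℂ (Fin N) → ℂ) (T : S.H →L[ℂ] S.H) : Prop :=
  ∀ u v : S.H,
    Tendsto (fun r : ℝ => ∫ z, (starRingEnd ℂ) (S.eval v (r • z)) * b z * S.eval u (r • z) ∂μ)
      (𝓝[<] (1 : ℝ)) (𝓝 ⟪v, T u⟫)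

/-!
Let `H_h = (1 - P) M_h` be the Hankel operator with symbol `h`. Then
`T_b T_h - T_{bh} = -P M_b H_h`, so it suffices that `H_h` is compact. The symbols `h` for which
`H_h` and `H_{conj h}` are compact form a closed star-subalgebra, and by the Stone–Weierstrass
theorem only the coordinates `z_j` have to be considered. Since `z_j` is analytic, `H_{z_j} = 0`.
For the conjugates, `|z| < 1` gives `∑ ‖H_{conj z_j} f‖² ≤ ⟪f, (1 - ∑ T_j T_j*) f⟫`, where
`T_j = T_{z_j}`, and the defect `1 - ∑ T_j T_j*` is compact: its kernel is
`(1 - ⟪z, w⟫) ^ (1 - t)`, so it is the average of the compact dilations `f ↦ f(r ·)` with weight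
`(t - 1) r ^ (t - 2)`.
-/

section CompactOperators

variable {𝕜 E F G : Type*} [RCLike 𝕜] [NormedAddCommGroup E] [NormedSpace 𝕜 E]
  [NormedAddCommGroup F] [NormedSpace 𝕜 F] [NormedAddCommGroup G] [NormedSpace 𝕜 G]
  {α : Type*} [MeasurableSpace α] {ν : Measure α}

theorem integral_mem_of_isClosed_submodule [NormedSpace ℝ E] [CompleteSpace E]
    {V : Submodule 𝕜 E} (hV : IsClosed (V : Set E)) {f : α → E} (hf : ∀ᵐ x ∂ν, f x ∈ V) :
    ∫ x, f x ∂ν ∈ V := by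
  by_cases hint : Integrable f ν
  · rw [← Submodule.ker_mkQ V, LinearMap.mem_ker, ← Submodule.coe_mkQL,
      ← V.mkQL.integral_comp_comm hint]
    refine integral_eq_zero_of_ae ?_
    filter_upwards [hf] with x hx using (Submodule.Quotient.mk_eq_zero V).2 hx
  · rw [integral_undef hint]
    exact V.zero_mem

theorem isCompactOperator_integral [NormedSpace ℝ F] [CompleteSpace F] [SMulCommClass ℝ 𝕜 F]
    {A : α → E →L[𝕜] F} (hA : ∀ᵐ x ∂ν, IsCompactOperator (A x)) :
    IsCompactOperator (∫ x, A x ∂ν : E →L[𝕜] F) :=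
  integral_mem_of_isClosed_submodule (V := compactOperator (RingHom.id 𝕜) E F)
    isClosed_setOfPred_isCompactOperator hA

theorem isCompactOperator_of_sq_norm_le [CompleteSpace F] {A : E →L[𝕜] F} {D : E →L[𝕜] G}
    (hD : IsCompactOperator D) (hA : ∀ f, ‖A f‖ ^ 2 ≤ ‖f‖ * ‖D f‖) : IsCompactOperator A := by
  refine (isCompactOperator_iff_isCompact_closure_image_closedBall
    (A : E →ₗ[𝕜] F) zero_lt_one).2
    (TotallyBounded.closure ?_ |>.isCompact_of_isClosed isClosed_closure)
  have hDball : TotallyBounded (D '' closedBall 0 1) :=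
    ((isCompactOperator_iff_isCompact_closure_image_closedBall
      (D : E →ₗ[𝕜] G) zero_lt_one).1 hD).totallyBounded.subset subset_closure
  refine Metric.totallyBounded_iff.2 fun ε hε ↦ ?_
  obtain ⟨T, hTsub, hTfin, hcover⟩ :=
    Metric.finite_approx_of_totallyBounded hDball (ε ^ 2 / 2) (by positivity)
  obtain ⟨Y, hYsub, hYfin, rfl⟩ :=
    Set.exists_subset_image_finite_and.1 ⟨T, hTsub, hTfin, (rfl : T = T)⟩
  refine ⟨A '' Y, hYfin.image _, ?_⟩
  rintro _ ⟨x, hx, rfl⟩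
  obtain ⟨_, ⟨y, hy, rfl⟩, hxy⟩ := mem_iUnion₂.1 (hcover ⟨x, hx, rfl⟩)
  refine mem_iUnion₂.2 ⟨A y, mem_image_of_mem A hy, ?_⟩
  have hdist : ‖x - y‖ ≤ 2 := by
    have := norm_sub_le x y
    linarith [mem_closedBall_zero_iff.1 hx, mem_closedBall_zero_iff.1 (hYsub hy)]
  rw [mem_ball, dist_eq_norm, ← map_sub] at hxy
  change dist (A x) (A y) < ε
  rw [dist_eq_norm, ← map_sub]
  refine lt_of_pow_lt_pow_left₀ 2 hε.le ?_
  calc ‖A (x - y)‖ ^ 2 ≤ ‖x - y‖ * ‖D (x - y)‖ := hA _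
    _ ≤ 2 * ‖D (x - y)‖ := by gcongr
    _ < ε ^ 2 := by linarith

end CompactOperators

section RankOne

variable {𝕜 E F : Type*} [RCLike 𝕜] [NormedAddCommGroup E] [InnerProductSpace 𝕜 E]
  [NormedAddCommGroup F] [InnerProductSpace 𝕜 F]

theorem isCompactOperator_rankOne (x : E) (y : F) :
    IsCompactOperator (InnerProductSpace.rankOne 𝕜 x y) := by
  rw [InnerProductSpace.rankOne_def']
  exact (isCompactOperator_of_locallyCompactSpace_rng
    (T := ContinuousLinearMap.toSpanSingleton 𝕜 x)).comp_clm _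

theorem continuous_rankOne_self : Continuous fun x : E ↦ InnerProductSpace.rankOne 𝕜 x x := by
  have h : Continuous fun x : E ↦ ContinuousLinearMap.smulRightL 𝕜 E E (innerSL 𝕜 x) x :=
    ((ContinuousLinearMap.smulRightL 𝕜 E E).continuous.comp (innerSL 𝕜).continuous).clm_apply
      continuous_id
  exact h

end RankOne

section Gram

theorem continuousOn_of_continuousOn_inner {X H : Type*} [TopologicalSpace X]
    [NormedAddCommGroup H] [InnerProductSpace ℂ H] {K : X → H} {s : Set X}
    (h : ContinuousOn (fun p : X × X ↦ ⟪K p.1, K p.2⟫) (s ×ˢ s)) : ContinuousOn K s := by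
  intro x hx
  have hdiag : ContinuousWithinAt (fun y ↦ ⟪K y, K y⟫) s x :=
    (h.comp (f := fun y ↦ (y, y)) (by fun_prop) fun y hy ↦ ⟨hy, hy⟩) x hx
  have hleft : ContinuousWithinAt (fun y ↦ ⟪K x, K y⟫) s x :=
    (h.comp (f := fun y ↦ (x, y)) (by fun_prop) fun y hy ↦ ⟨hx, hy⟩) x hx
  have hright : ContinuousWithinAt (fun y ↦ ⟪K y, K x⟫) s x :=
    (h.comp (f := fun y ↦ (y, x)) (by fun_prop) fun y hy ↦ ⟨hy, hx⟩) x hx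
  have hsq : ContinuousWithinAt (fun y ↦ ⟪K y - K x, K y - K x⟫) s x := by
    simp only [inner_sub_left, inner_sub_right]
    exact (hdiag.sub hleft).sub (hright.sub continuousWithinAt_const)
  have hnorm : ContinuousWithinAt (fun y ↦ ‖K y - K x‖) s x := by
    simp only [norm_eq_sqrt_re_inner (𝕜 := ℂ)]
    exact (RCLike.continuous_re.continuousAt.comp_continuousWithinAt hsq).sqrt
  rw [ContinuousWithinAt, tendsto_iff_norm_sub_tendsto_zero]
  simpa only [ContinuousWithinAt, sub_self, norm_zero] using hnorm

end Gram

section PowerBounded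

theorem norm_le_one_of_isSelfAdjoint_of_norm_pow_le {A : Type*} [NormedRing A] [StarRing A]
    [CStarRing A] {a : A} (ha : IsSelfAdjoint a) {C : ℝ} (hC : ∀ n, ‖a ^ (n + 1)‖ ≤ C) :
    ‖a‖ ≤ 1 := by
  by_contra! hlt
  obtain ⟨n, hn⟩ := pow_unbounded_of_one_lt C hlt
  have hbound : ‖a‖ ^ 2 ^ n ≤ C := by
    rw [← ha.norm_pow_two_pow n, ← Nat.sub_add_cancel (Nat.one_le_two_pow (n := n))]
    exact hC _
  have hpow := pow_le_pow_right₀ hlt.le (Nat.lt_two_pow_self (n := n)).le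
  exact (hn.trans_le (hpow.trans hbound)).false

end PowerBounded

section Multiplication

variable {α : Type*} [MeasurableSpace α] {ν : Measure α} {φ ψ : α → ℂ}

/-- Multiplication by an essentially bounded function `φ`, as an operator on `L²(ν)`. -/
def mulL2 (hφ : MemLp φ ⊤ ν) : Lp ℂ 2 ν →L[ℂ] Lp ℂ 2 ν :=
  (ContinuousLinearMap.mul ℂ ℂ).holderL ν ⊤ 2 2 hφ.toLp

theorem coeFn_mulL2 (hφ : MemLp φ ⊤ ν) (F : Lp ℂ 2 ν) :
    mulL2 hφ F =ᵐ[ν] fun z ↦ φ z * F z := by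
  filter_upwards [(ContinuousLinearMap.mul ℂ ℂ).coeFn_holder (r := 2) hφ.toLp F, hφ.coeFn_toLp]
    with z hmul hz
  rw [← hz]
  exact hmul

theorem mulL2_congr (hφ : MemLp φ ⊤ ν) (hψ : MemLp ψ ⊤ ν) (h : φ =ᵐ[ν] ψ) :
    mulL2 hφ = mulL2 hψ := by
  rw [mulL2, mulL2, MemLp.toLp_congr hφ hψ h]

theorem mulL2_mul (hφ : MemLp φ ⊤ ν) (hψ : MemLp ψ ⊤ ν) :
    mulL2 (hψ.mul hφ) = mulL2 hφ * mulL2 hψ := by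
  refine ContinuousLinearMap.ext fun F ↦ Lp.ext ?_
  filter_upwards [coeFn_mulL2 (hψ.mul hφ) F, coeFn_mulL2 hφ (mulL2 hψ F), coeFn_mulL2 hψ F]
    with z hmul hz hz'
  rw [mul_apply_eq_comp, hmul, hz, hz', Pi.mul_apply, mul_assoc]

theorem mulL2_add (hφ : MemLp φ ⊤ ν) (hψ : MemLp ψ ⊤ ν) :
    mulL2 (hφ.add hψ) = mulL2 hφ + mulL2 hψ := by
  refine ContinuousLinearMap.ext fun F ↦ Lp.ext ?_
  filter_upwards [coeFn_mulL2 (hφ.add hψ) F, coeFn_mulL2 hφ F, coeFn_mulL2 hψ F,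
    Lp.coeFn_add (mulL2 hφ F) (mulL2 hψ F)] with z hadd hz hz' hsum
  rw [_root_.add_apply, hadd, hsum, Pi.add_apply, Pi.add_apply, hz, hz', add_mul]

theorem mulL2_const (c : ℂ) :
    mulL2 (memLp_top_const c) = algebraMap ℂ (Lp ℂ 2 ν →L[ℂ] Lp ℂ 2 ν) c := by
  refine ContinuousLinearMap.ext fun F ↦ Lp.ext ?_
  filter_upwards [coeFn_mulL2 (memLp_top_const c) F, Lp.coeFn_smul c F] with z hmul hsmul
  rw [ContinuousLinearMap.algebraMap_apply, hmul, hsmul, Pi.smul_apply, smul_eq_mul]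

theorem inner_mulL2_left (hφ : MemLp φ ⊤ ν) (F G : Lp ℂ 2 ν) :
    ⟪mulL2 hφ.star F, G⟫ = ⟪F, mulL2 hφ G⟫ := by
  rw [L2.inner_def, L2.inner_def]
  refine integral_congr_ae ?_
  filter_upwards [coeFn_mulL2 hφ.star F, coeFn_mulL2 hφ G] with z hF hG
  rw [hF, hG, RCLike.inner_apply, RCLike.inner_apply, Pi.star_apply, map_mul, Complex.star_def,
    Complex.conj_conj]
  ring

theorem star_mulL2 (hφ : MemLp φ ⊤ ν) : star (mulL2 hφ) = mulL2 hφ.star :=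
  (ContinuousLinearMap.eq_adjoint_iff _ _).2 (inner_mulL2_left hφ) |>.symm

theorem inner_mulL2 (hφ : MemLp φ ⊤ ν) (F G : Lp ℂ 2 ν) :
    ⟪G, mulL2 hφ F⟫ = ∫ z, (starRingEnd ℂ) (G z) * φ z * F z ∂ν := by
  rw [L2.inner_def]
  refine integral_congr_ae ?_
  filter_upwards [coeFn_mulL2 hφ F] with z hz
  rw [hz, RCLike.inner_apply]
  ring

theorem memLp_top_of_continuousOn {X E : Type*} [TopologicalSpace X] [MeasurableSpace X]
    [OpensMeasurableSpace X] [NormedAddCommGroup E] {ρ : Measure X} {K : Set X}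
    (hK : IsCompact K) (hKm : MeasurableSet K) (hρ : ∀ᵐ x ∂ρ, x ∈ K) {f : X → E}
    (hf : ContinuousOn f K) : MemLp f ⊤ ρ := by
  obtain ⟨C, hC⟩ := hK.exists_bound_of_continuousOn hf
  have hmeas : AEStronglyMeasurable f ρ := by
    rw [← Measure.restrict_eq_self_of_ae_mem hρ]
    exact hf.aestronglyMeasurable_of_isCompact hK hKm
  exact memLp_top_of_bound hmeas C (hρ.mono hC)

end Multiplication

section SquareIntegrable

variable {α : Type*} [MeasurableSpace α] {ν : Measure α}

theorem norm_sq_Lp_two_eq_integral (F : Lp ℂ 2 ν) : ‖F‖ ^ 2 = ∫ z, ‖F z‖ ^ 2 ∂ν := by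
  have hinner : ⟪F, F⟫ = ((∫ z, ‖F z‖ ^ 2 ∂ν : ℝ) : ℂ) := by
    rw [L2.inner_def, ← integral_complex_ofReal]
    simp [inner_self_eq_norm_sq_to_K]
  rw [← Complex.ofReal_inj, ← hinner, inner_self_eq_norm_sq_to_K]
  norm_cast

theorem eLpNorm_two_eq_ofReal_sqrt_re_integral {f : α → ℂ} (hf : MemLp f 2 ν) :
    eLpNorm f 2 ν = ENNReal.ofReal √(∫ z, (starRingEnd ℂ) (f z) * f z ∂ν).re := by
  have hre : (∫ z, (starRingEnd ℂ) (f z) * f z ∂ν).re = ‖hf.toLp f‖ ^ 2 := by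
    simp_rw [Complex.conj_mul', ← Complex.ofReal_pow, integral_complex_ofReal, Complex.ofReal_re]
    rw [norm_sq_Lp_two_eq_integral]
    exact integral_congr_ae (hf.coeFn_toLp.mono fun z hz ↦ by simp only [hz])
  rw [hre, Real.sqrt_sq (norm_nonneg _), Lp.norm_toLp, ENNReal.ofReal_toReal hf.eLpNorm_ne_top]

theorem sum_norm_mulL2_sq_le {ι : Type*} [Fintype ι] {φ : ι → α → ℂ} (hφ : ∀ i, MemLp (φ i) ⊤ ν)
    (hsum : ∀ᵐ z ∂ν, ∑ i, ‖φ i z‖ ^ 2 ≤ 1) (F : Lp ℂ 2 ν) :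
    ∑ i, ‖mulL2 (hφ i) F‖ ^ 2 ≤ ‖F‖ ^ 2 := by
  have hint (G : Lp ℂ 2 ν) : Integrable (fun z ↦ ‖G z‖ ^ 2) ν :=
    (Lp.memLp G).integrable_norm_pow two_ne_zero
  simp only [norm_sq_Lp_two_eq_integral]
  rw [← integral_finsetSum _ fun i _ ↦ hint _]
  refine integral_mono_ae (integrable_finsetSum _ fun i _ ↦ hint _) (hint F) ?_
  filter_upwards [ae_all_iff.2 fun i ↦ coeFn_mulL2 (hφ i) F, hsum] with z hmul hz
  simp only [hmul, norm_mul, mul_pow, ← Finset.sum_mul]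
  exact mul_le_of_le_one_left (sq_nonneg _) hz

end SquareIntegrable

section Compressions

open ContinuousLinearMap

variable {H K : Type*} [NormedAddCommGroup H] [InnerProductSpace ℂ H] [CompleteSpace H]
  [NormedAddCommGroup K] [InnerProductSpace ℂ K] [CompleteSpace K] (J : H →ₗᵢ[ℂ] K)

/-- The Toeplitz operator `J* M J`: the compression of `M` to the space `H`, embedded in `K` by the
isometry `J`. -/
def toeplitz (M : K →L[ℂ] K) : H →L[ℂ] H :=
  adjoint J.toContinuousLinearMap ∘L M ∘L J.toContinuousLinearMap

/-- The Hankel operator `(1 - J J*) M J`: the part of `M` which maps `H` to its orthogonal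
complement in `K`. -/
def hankel (M : K →L[ℂ] K) : H →L[ℂ] K :=
  (1 - J.toContinuousLinearMap ∘L adjoint J.toContinuousLinearMap) ∘L M ∘L J.toContinuousLinearMap

theorem toeplitz_apply (M : K →L[ℂ] K) (f : H) :
    toeplitz J M f = adjoint J.toContinuousLinearMap (M (J f)) := rfl

theorem hankel_apply (M : K →L[ℂ] K) (f : H) :
    hankel J M f = M (J f) - J (toeplitz J M f) := rfl

theorem inner_toeplitz (M : K →L[ℂ] K) (f g : H) : ⟪g, toeplitz J M f⟫ = ⟪J g, M (J f)⟫ :=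
  adjoint_inner_right J.toContinuousLinearMap g _

theorem adjoint_apply_isometry (f : H) : adjoint J.toContinuousLinearMap (J f) = f :=
  ext_inner_left ℂ fun g ↦ (adjoint_inner_right _ g _).trans (J.inner_map_map g f)

theorem adjoint_toeplitz (M : K →L[ℂ] K) : adjoint (toeplitz J M) = toeplitz J (star M) := by
  rw [toeplitz, adjoint_comp, adjoint_comp, adjoint_adjoint, comp_assoc, star_eq_adjoint, toeplitz]

theorem toeplitz_comp_toeplitz_sub_toeplitz_mul (A B : K →L[ℂ] K) :
    toeplitz J A ∘L toeplitz J B - toeplitz J (A * B)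
      = -((adjoint J.toContinuousLinearMap ∘L A) ∘L hankel J B) := by
  ext f
  simp only [_root_.sub_apply, _root_.neg_apply, comp_apply, toeplitz_apply, hankel_apply,
    mul_apply_eq_comp, map_sub, neg_sub]

theorem inner_apply_hankel (M : K →L[ℂ] K) (f g : H) : ⟪J g, hankel J M f⟫ = 0 := by
  rw [hankel_apply, inner_sub_right, J.inner_map_map, inner_toeplitz, sub_self]

theorem norm_hankel_apply_sq (M : K →L[ℂ] K) (f : H) :
    ‖hankel J M f‖ ^ 2 = ‖M (J f)‖ ^ 2 - ‖toeplitz J M f‖ ^ 2 := by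
  have hsplit : M (J f) = J (toeplitz J M f) + hankel J M f := by
    rw [hankel_apply, add_sub_cancel]
  have hpyth := norm_add_sq_eq_norm_sq_add_norm_sq_of_inner_eq_zero (𝕜 := ℂ) _ _
    (inner_apply_hankel J M f (toeplitz J M f))
  rw [← hsplit, J.norm_map] at hpyth
  linarith

theorem hankel_apply_eq_zero {M : K →L[ℂ] K} {f : H}
    (hM : ∀ g, (∀ f', ⟪g, J f'⟫ = 0) → ⟪g, M (J f)⟫ = 0) : hankel J M f = 0 := by
  have hortho : ∀ f', ⟪hankel J M f, J f'⟫ = 0 := fun f' ↦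
    inner_eq_zero_symm.1 (inner_apply_hankel J M f f')
  rw [← inner_self_eq_zero (𝕜 := ℂ)]
  nth_rw 2 [hankel_apply]
  rw [inner_sub_right, hM _ hortho, hortho, sub_zero]

theorem hankel_add (A B : K →L[ℂ] K) : hankel J (A + B) = hankel J A + hankel J B := by
  rw [hankel, add_comp, comp_add, hankel, hankel]

theorem hankel_algebraMap (c : ℂ) : hankel J (algebraMap ℂ _ c) = 0 := by
  ext f
  rw [hankel_apply, toeplitz_apply, ContinuousLinearMap.algebraMap_apply, map_smul,
    adjoint_apply_isometry, map_smul, sub_self, _root_.zero_apply]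

theorem hankel_mul (A B : K →L[ℂ] K) :
    hankel J (A * B) = (1 - J.toContinuousLinearMap ∘L adjoint J.toContinuousLinearMap) ∘L A ∘L
      hankel J B + hankel J A ∘L toeplitz J B := by
  have hB : B ∘L J.toContinuousLinearMap
      = hankel J B + J.toContinuousLinearMap ∘L toeplitz J B := by
    ext f
    exact (sub_add_cancel _ _).symm
  rw [hankel, ContinuousLinearMap.mul_def, comp_assoc, hB, comp_add, comp_add]
  rfl

theorem continuous_hankel : Continuous (hankel J) :=
  continuous_const.clm_comp (continuous_id.clm_comp continuous_const)

/-- The operators on `K` which, together with their adjoints, have a compact Hankel operator. -/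
def compactHankel : StarSubalgebra ℂ (K →L[ℂ] K) where
  carrier := {M | IsCompactOperator (hankel J M) ∧ IsCompactOperator (hankel J (star M))}
  mul_mem' {A B} hA hB := by
    have hmul {A B : K →L[ℂ] K} (hA : IsCompactOperator (hankel J A))
        (hB : IsCompactOperator (hankel J B)) : IsCompactOperator (hankel J (A * B)) := by
      rw [hankel_mul]
      exact ((hB.clm_comp A).clm_comp (1 - J.toContinuousLinearMap ∘L _)).add
        (hA.comp_clm (toeplitz J B))
    exact ⟨hmul hA.1 hB.1, star_mul A B ▸ hmul hB.2 hA.2⟩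
  add_mem' {A B} hA hB := by
    have hadd {A B : K →L[ℂ] K} (hA : IsCompactOperator (hankel J A))
        (hB : IsCompactOperator (hankel J B)) : IsCompactOperator (hankel J (A + B)) := by
      rw [hankel_add]
      exact hA.add hB
    exact ⟨hadd hA.1 hB.1, star_add A B ▸ hadd hA.2 hB.2⟩
  algebraMap_mem' c := by
    have hconst (c : ℂ) : IsCompactOperator (hankel J (algebraMap ℂ (K →L[ℂ] K) c)) := by
      rw [hankel_algebraMap]
      exact isCompactOperator_zero
    exact ⟨hconst c, algebraMap_star_comm (A := K →L[ℂ] K) c ▸ hconst (star c)⟩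
  star_mem' {A} hA := ⟨hA.2, (star_star A).symm ▸ hA.1⟩

theorem isClosed_compactHankel : IsClosed (compactHankel J : Set (K →L[ℂ] K)) :=
  (isClosed_setOfPred_isCompactOperator.preimage (continuous_hankel J)).inter
    (isClosed_setOfPred_isCompactOperator.preimage ((continuous_hankel J).comp continuous_star))

end Compressions

section ContinuousSymbols

open scoped CStarAlgebra

variable {X : Type*} [TopologicalSpace X] {K : Set X}

theorem continuousOn_extend_val (f : C(K, ℂ)) :
    ContinuousOn (Function.extend Subtype.val f 0) K := by
  rw [continuousOn_iff_continuous_domRestrict]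
  convert f.continuous using 1
  exact funext fun x ↦ Subtype.val_injective.extend_apply f 0 x

variable [MeasurableSpace X] [OpensMeasurableSpace X] {ν : Measure X}

/-- The representation of `C(K)` on `L²(ν)` by multiplication, for `ν` concentrated on the compact
set `K`. Functions on `K` are extended by zero. -/
def mulContinuous (hK : IsCompact K) (hKm : MeasurableSet K) (hν : ∀ᵐ x ∂ν, x ∈ K) :
    C(K, ℂ) →⋆ₐ[ℂ] (Lp ℂ 2 ν →L[ℂ] Lp ℂ 2 ν) :=
  have hmem (f : C(K, ℂ)) : MemLp (Function.extend Subtype.val f 0) ⊤ ν :=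
    memLp_top_of_continuousOn hK hKm hν (continuousOn_extend_val f)
  have hconst (c : ℂ) : mulL2 (hmem (algebraMap ℂ C(K, ℂ) c)) = algebraMap ℂ _ c := by
    rw [← mulL2_const]
    refine mulL2_congr _ _ ?_
    filter_upwards [hν] with x hx
    exact Subtype.val_injective.extend_apply _ _ (⟨x, hx⟩ : K)
  { toFun := fun f ↦ mulL2 (hmem f)
    map_one' := by simpa only [map_one] using hconst 1
    map_mul' := fun f g ↦ by
      rw [← mulL2_mul]
      congr
      simp [← Function.extend_mul]
    map_zero' := by simpa only [map_zero] using hconst 0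
    map_add' := fun f g ↦ by
      rw [← mulL2_add]
      congr
      simp [← Function.extend_add]
    commutes' := hconst
    map_star' := fun f ↦ by
      rw [star_mulL2]
      congr
      have hzero : (star ∘ 0 : X → ℂ) = 0 := funext fun _ ↦ star_zero ℂ
      refine funext fun x ↦ .symm ?_
      rw [Pi.star_apply, Function.apply_extend star, hzero]
      rfl }

theorem mulContinuous_domRestrict (hK : IsCompact K) (hKm : MeasurableSet K) (hν : ∀ᵐ x ∂ν, x ∈ K)
    {h : X → ℂ} (hh : ContinuousOn h K) :
    mulContinuous hK hKm hν ⟨K.domRestrict h, hh.domRestrict⟩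
      = mulL2 (memLp_top_of_continuousOn hK hKm hν hh) := by
  refine mulL2_congr _ _ ?_
  filter_upwards [hν] with x hx
  exact Subtype.val_injective.extend_apply _ _ (⟨x, hx⟩ : K)

theorem mulL2_mem_of_separatesPoints (hK : IsCompact K) (hKm : MeasurableSet K)
    (hν : ∀ᵐ x ∂ν, x ∈ K) {𝒜 : StarSubalgebra ℂ (Lp ℂ 2 ν →L[ℂ] Lp ℂ 2 ν)}
    (h𝒜 : IsClosed (𝒜 : Set (Lp ℂ 2 ν →L[ℂ] Lp ℂ 2 ν))) {ι : Type*} {f : ι → X → ℂ}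
    (hf : ∀ i, ContinuousOn (f i) K) (hsep : ∀ x ∈ K, ∀ y ∈ K, x ≠ y → ∃ i, f i x ≠ f i y)
    (hmem : ∀ i, mulL2 (memLp_top_of_continuousOn hK hKm hν (hf i)) ∈ 𝒜)
    {h : X → ℂ} (hh : ContinuousOn h K) :
    mulL2 (memLp_top_of_continuousOn hK hKm hν hh) ∈ 𝒜 := by
  have := isCompact_iff_compactSpace.1 hK
  let Φ := mulContinuous hK hKm hν
  let F : Set C(K, ℂ) := range fun i ↦ ⟨K.domRestrict (f i), (hf i).domRestrict⟩
  have hF : StarAlgebra.adjoin ℂ F ≤ 𝒜.comap Φ := by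
    refine StarAlgebra.adjoin_le ?_
    rintro _ ⟨i, rfl⟩
    change Φ _ ∈ 𝒜
    rw [mulContinuous_domRestrict hK hKm hν (hf i)]
    exact hmem i
  have hsepF : (StarAlgebra.adjoin ℂ F).SeparatesPoints := by
    intro x y hxy
    obtain ⟨i, hi⟩ := hsep x x.2 y y.2 (Subtype.coe_ne_coe.2 hxy)
    exact ⟨_, ⟨_, StarAlgebra.subset_adjoin ℂ F ⟨i, rfl⟩, rfl⟩, hi⟩
  have hdense := StarSubalgebra.topologicalClosure_minimal hF
    (h𝒜.preimage (map_continuous Φ))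
  rw [ContinuousMap.starSubalgebra_topologicalClosure_eq_top_of_separatesPoints _ hsepF] at hdense
  rw [← mulContinuous_domRestrict hK hKm hν hh]
  exact hdense (StarSubalgebra.mem_top)

end ContinuousSymbols

section ComplexPowers

theorem one_sub_mem_slitPlane {x : ℂ} (hx : ‖x‖ < 1) : 1 - x ∈ Complex.slitPlane :=
  sub_eq_add_neg 1 x ▸ Complex.mem_slitPlane_of_norm_lt_one ((norm_neg x).trans_lt hx)

theorem exists_norm_one_sub_cpow_le {ρ : ℝ} (hρ : ρ < 1) (c : ℂ) :
    ∃ C, ∀ x : ℂ, ‖x‖ ≤ ρ → ‖(1 - x) ^ c‖ ≤ C := by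
  obtain ⟨C, hC⟩ := (isCompact_closedBall (0 : ℂ) ρ).exists_bound_of_continuousOn
    (f := fun x ↦ (1 - x) ^ c) (ContinuousOn.cpow (by fun_prop) continuousOn_const fun x hx ↦
      one_sub_mem_slitPlane ((mem_closedBall_zero_iff.1 hx).trans_lt hρ))
  exact ⟨C, fun x hx ↦ hC x (mem_closedBall_zero_iff.2 hx)⟩

theorem hasDerivAt_one_sub_cpow {x : ℂ} (hx : ‖x‖ < 1) (c : ℂ) :
    HasDerivAt (fun y : ℂ ↦ (1 - y) ^ c) (-c * (1 - x) ^ (c - 1)) x := by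
  convert ((hasDerivAt_id' x).const_sub 1).cpow_const (c := c) (one_sub_mem_slitPlane hx) using 1
  ring

theorem hasDerivAt_integral_mul_one_sub_cpow {α : Type*} [MeasurableSpace α] {ν : Measure α}
    {g a b : α → ℂ} {ρ : ℝ} (hg : Integrable g ν) (ha : AEStronglyMeasurable a ν)
    (hb : AEStronglyMeasurable b ν) (hρ : ρ < 1) (haρ : ∀ᵐ z ∂ν, ‖a z‖ ≤ ρ)
    (hb1 : ∀ᵐ z ∂ν, ‖b z‖ ≤ 1) (c : ℂ) :
    HasDerivAt (fun ε : ℂ ↦ ∫ z, g z * (1 - (a z + ε * b z)) ^ c ∂ν)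
      (∫ z, g z * (-c * (1 - a z) ^ (c - 1) * b z) ∂ν) 0 := by
  obtain ⟨ρ', hρρ', hρ'⟩ := exists_between hρ
  obtain ⟨C, hC⟩ := exists_norm_one_sub_cpow_le hρ' c
  obtain ⟨C', hC'⟩ := exists_norm_one_sub_cpow_le hρ' (c - 1)
  have hnhds : ball (0 : ℂ) (ρ' - ρ) ∈ 𝓝 0 := ball_mem_nhds 0 (sub_pos.2 hρρ')
  have hpert {z : α} (hz : ‖a z‖ ≤ ρ) (hz' : ‖b z‖ ≤ 1) {ε : ℂ} (hε : ε ∈ ball 0 (ρ' - ρ)) :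
      ‖a z + ε * b z‖ ≤ ρ' := by
    have hεb : ‖ε * b z‖ ≤ ‖ε‖ :=
      (norm_mul_le _ _).trans (mul_le_of_le_one_right (norm_nonneg ε) hz')
    linarith [norm_add_le (a z) (ε * b z), mem_ball_zero_iff.1 hε]
  have hmeas (ε d : ℂ) : AEStronglyMeasurable (fun z ↦ (1 - (a z + ε * b z)) ^ d) ν :=
    ((aestronglyMeasurable_const.sub (ha.add (hb.const_mul ε))).aemeasurable.pow_const
      d).aestronglyMeasurable
  have hderiv := (hasDerivAt_integral_of_dominated_loc_of_deriv_le
    (F := fun ε z ↦ g z * (1 - (a z + ε * b z)) ^ c)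
    (F' := fun ε z ↦ g z * (-c * (1 - (a z + ε * b z)) ^ (c - 1) * b z))
    (bound := fun z ↦ ‖g z‖ * (‖c‖ * C')) hnhds
    (.of_forall fun ε ↦ hg.1.mul (hmeas ε c)) ?_
    (hg.1.mul (((hmeas 0 (c - 1)).const_mul (-c)).mul hb)) ?_ (hg.norm.mul_const _) ?_).2
  · simpa only [zero_mul, add_zero] using hderiv
  · refine hg.mul_bdd (c := C) (hmeas 0 c) ?_
    filter_upwards [haρ, hb1] with z hz hz'
    exact hC _ (hpert hz hz' (mem_of_mem_nhds hnhds))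
  · filter_upwards [haρ, hb1] with z hz hz' ε hε
    rw [norm_mul, norm_mul, norm_mul, norm_neg]
    have hbound := hC' _ (hpert hz hz' hε)
    exact mul_le_mul_of_nonneg_left ((mul_le_of_le_one_right (by positivity) hz').trans
      (mul_le_mul_of_nonneg_left hbound (norm_nonneg c))) (norm_nonneg (g z))
  · filter_upwards [haρ, hb1] with z hz hz' ε hε
    have hinner : HasDerivAt (fun ε ↦ a z + ε * b z) (b z) ε :=
      (hasDerivAt_mul_const (b z)).const_add (a z)
    exact ((hasDerivAt_one_sub_cpow ((hpert hz hz' hε).trans_lt hρ') c).comp ε hinner).const_mul _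

theorem hasDerivAt_rpow_mul_one_sub_mul_cpow {t r : ℝ} (hr : 0 < r) {x : ℂ} (hx : ‖r * x‖ < 1) :
    HasDerivAt (fun r : ℝ ↦ ((r ^ (t - 1) : ℝ) : ℂ) * (1 - r * x) ^ (1 - t : ℂ))
      (((t - 1) * r ^ (t - 2) : ℝ) * (1 - r * x) ^ (-t : ℂ)) r := by
  have hpow : HasDerivAt (fun r : ℝ ↦ ((r ^ (t - 1) : ℝ) : ℂ)) ((t - 1) * r ^ (t - 2) : ℝ) r := by
    convert (Real.hasDerivAt_rpow_const (p := t - 1) (Or.inl hr.ne')).ofReal_comp using 4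
    ring
  have hlin : HasDerivAt (fun r : ℝ ↦ (r : ℂ) * x) x r :=
    (hasDerivAt_mul_const x).comp_ofReal
  have hcpow : (1 - r * x) ^ (1 - t : ℂ) = (1 - r * x) * (1 - r * x) ^ (-t : ℂ) := by
    rw [show (1 - t : ℂ) = 1 + -t from sub_eq_add_neg _ _,
      Complex.cpow_add _ _ (Complex.slitPlane_ne_zero (one_sub_mem_slitPlane hx)), Complex.cpow_one]
  have hrpow : r ^ (t - 1) = r * r ^ (t - 2) := by
    rw [show t - 1 = 1 + (t - 2) by ring, Real.rpow_add hr, Real.rpow_one]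
  refine (hpow.mul ((hasDerivAt_one_sub_cpow hx (1 - t)).comp r hlin)).congr_deriv ?_
  simp only [Function.comp_apply]
  rw [hcpow, hrpow, show (1 - t - 1 : ℂ) = -t by ring]
  push_cast
  ring

theorem integral_rpow_mul_one_sub_mul_cpow {t : ℝ} (ht : 1 < t) {x : ℂ} (hx : ‖x‖ < 1) :
    ∫ r in Ioo (0 : ℝ) 1, ((t - 1) * r ^ (t - 2) : ℝ) * (1 - r * x) ^ (-t : ℂ)
      = (1 - x) ^ (1 - t : ℂ) := by
  have hlt {r : ℝ} (hr : r ∈ Icc (0 : ℝ) 1) : ‖r * x‖ < 1 := by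
    rw [norm_mul, Complex.norm_real, Real.norm_of_nonneg hr.1]
    exact (mul_le_of_le_one_left (norm_nonneg x) hr.2).trans_lt hx
  have hcont (c : ℂ) : ContinuousOn (fun r : ℝ ↦ (1 - r * x) ^ c) (Icc 0 1) :=
    ContinuousOn.cpow (by fun_prop) continuousOn_const fun r hr ↦ one_sub_mem_slitPlane (hlt hr)
  rw [← integral_Ioc_eq_integral_Ioo, ← intervalIntegral.integral_of_le zero_le_one,
    intervalIntegral.integral_eq_sub_of_hasDerivAt_of_le zero_le_one
      (f := fun r : ℝ ↦ ((r ^ (t - 1) : ℝ) : ℂ) * (1 - r * x) ^ (1 - t : ℂ)) _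
      fun r hr ↦ hasDerivAt_rpow_mul_one_sub_mul_cpow hr.1 (hlt (Ioo_subset_Icc_self hr))]
  · simp [Real.zero_rpow (sub_pos.2 ht).ne']
  · refine IntervalIntegrable.mul_continuousOn ?_ (by rw [uIcc_of_le zero_le_one]; exact hcont _)
    have hint := (intervalIntegral.intervalIntegrable_rpow' (a := 0) (b := 1)
      (by linarith : -1 < t - 2)).const_mul (t - 1)
    exact ⟨hint.1.ofReal, hint.2.ofReal⟩
  · exact (Complex.continuous_ofReal.comp_continuousOn
      (Real.continuous_rpow_const (sub_pos.2 ht).le).continuousOn).mul (hcont _)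

end ComplexPowers

namespace BallFunctionSpace

variable {N : ℕ} {t : ℝ} {μ : Measure (EuclideanSpace ℂ (Fin N))}

section Ball

variable {w z : EuclideanSpace ℂ (Fin N)}

theorem smul_mem_ball {r : ℝ} (hr : r ∈ Icc (0 : ℝ) 1) (hz : z ∈ Ball N) : r • z ∈ Ball N :=
  balanced_ball_zero.smul_mem ((Real.norm_of_nonneg hr.1).trans_le hr.2) hz

theorem norm_inner_le_of_mem_ball (w : EuclideanSpace ℂ (Fin N)) (hz : z ∈ Ball N) :
    ‖⟪w, z⟫‖ ≤ ‖w‖ :=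
  (norm_inner_le_norm w z).trans
    (mul_le_of_le_one_right (norm_nonneg w) (mem_ball_zero_iff.1 hz).le)

theorem norm_inner_lt_one (hw : w ∈ Ball N) (hz : z ∈ Ball N) : ‖⟪w, z⟫‖ < 1 :=
  (norm_inner_le_of_mem_ball w hz).trans_lt (mem_ball_zero_iff.1 hw)

theorem inner_real_smul_left (r : ℝ) (w z : EuclideanSpace ℂ (Fin N)) :
    ⟪r • w, z⟫ = r * ⟪w, z⟫ := by
  rw [← Complex.coe_smul, inner_smul_left, Complex.conj_ofReal]

theorem inner_real_smul_right (r : ℝ) (w z : EuclideanSpace ℂ (Fin N)) :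
    ⟪w, r • z⟫ = r * ⟪w, z⟫ := by
  rw [← Complex.coe_smul, inner_smul_right]

theorem aestronglyMeasurable_of_continuousOn_ball (hμ : ∀ᵐ z ∂μ, z ∈ Ball N) {F : Type*}
    [TopologicalSpace F] [TopologicalSpace.PseudoMetrizableSpace F]
    {φ : EuclideanSpace ℂ (Fin N) → F} (hφ : ContinuousOn φ (Ball N)) :
    AEStronglyMeasurable φ μ := by
  rw [← Measure.restrict_eq_self_of_ae_mem hμ]
  exact hφ.aestronglyMeasurable measurableSet_ball

end Ball

variable (S : BallFunctionSpace N t μ)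

section Kernel

theorem inner_kernel_kernel {w z : EuclideanSpace ℂ (Fin N)} (hz : z ∈ Ball N) (hw : w ∈ Ball N) :
    ⟪S.kernel z, S.kernel w⟫ = (1 - ⟪w, z⟫) ^ (-t : ℂ) := by
  rw [S.reproducing _ z hz, S.eval_kernel w hw z hz]

theorem inner_kernel_smul_left {r : ℝ} (hr : r ∈ Icc (0 : ℝ) 1) {w z : EuclideanSpace ℂ (Fin N)}
    (hz : z ∈ Ball N) (hw : w ∈ Ball N) :
    ⟪S.kernel (r • z), S.kernel w⟫ = ⟪S.kernel z, S.kernel (r • w)⟫ := by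
  rw [S.inner_kernel_kernel (smul_mem_ball hr hz) hw,
    S.inner_kernel_kernel hz (smul_mem_ball hr hw), inner_real_smul_left, inner_real_smul_right]

theorem ext_inner_kernel {f g : S.H} (h : ∀ w ∈ Ball N, ⟪S.kernel w, f⟫ = ⟪S.kernel w, g⟫) :
    f = g :=
  S.eval_injective f g fun w hw ↦ by rw [← S.reproducing f w hw, ← S.reproducing g w hw, h w hw]

theorem dense_span_kernel : Dense (Submodule.span ℂ (S.kernel '' Ball N) : Set S.H) := by
  rw [Submodule.dense_iff_topologicalClosure_eq_top, Submodule.topologicalClosure_eq_top_iff,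
    Submodule.eq_bot_iff]
  intro f hf
  refine S.ext_inner_kernel fun w hw ↦ ?_
  rw [inner_zero_right]
  exact (Submodule.mem_orthogonal _ f).1 hf _ (Submodule.subset_span (mem_image_of_mem _ hw))

theorem clm_ext_kernel {F : Type*} [NormedAddCommGroup F] [NormedSpace ℂ F] {A B : S.H →L[ℂ] F}
    (h : ∀ w ∈ Ball N, A (S.kernel w) = B (S.kernel w)) : A = B :=
  ContinuousLinearMap.ext_on S.dense_span_kernel (forall_mem_image.2 h)

theorem clm_ext_inner_kernel {A B : S.H →L[ℂ] S.H}
    (h : ∀ u ∈ Ball N, ∀ w ∈ Ball N,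
      ⟪S.kernel u, A (S.kernel w)⟫ = ⟪S.kernel u, B (S.kernel w)⟫) : A = B :=
  S.clm_ext_kernel fun w hw ↦ S.ext_inner_kernel fun u hu ↦ h u hu w hw

theorem continuousOn_kernel : ContinuousOn S.kernel (Ball N) := by
  refine continuousOn_of_continuousOn_inner (ContinuousOn.congr (ContinuousOn.cpow
    (f := fun p ↦ 1 - ⟪p.2, p.1⟫) (by fun_prop) continuousOn_const ?_)
    fun p hp ↦ S.inner_kernel_kernel hp.1 hp.2)
  exact fun p hp ↦ one_sub_mem_slitPlane (norm_inner_lt_one hp.2 hp.1)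

theorem exists_norm_kernel_le {ρ : ℝ} (hρ : ρ < 1) :
    ∃ C, ∀ w, ‖w‖ ≤ ρ → ‖S.kernel w‖ ≤ C := by
  obtain ⟨C, hC⟩ := (isCompact_closedBall 0 ρ).exists_bound_of_continuousOn
    (S.continuousOn_kernel.mono (closedBall_subset_ball hρ))
  exact ⟨C, fun w hw ↦ hC w (mem_closedBall_zero_iff.2 hw)⟩

theorem exists_norm_eval_kernel_le {w : EuclideanSpace ℂ (Fin N)} (hw : w ∈ Ball N) :
    ∃ C, ∀ z ∈ Ball N, ‖S.eval (S.kernel w) z‖ ≤ C := by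
  obtain ⟨C, hC⟩ := exists_norm_one_sub_cpow_le (mem_ball_zero_iff.1 hw) (-t)
  refine ⟨C, fun z hz ↦ ?_⟩
  rw [S.eval_kernel w hw z hz]
  exact hC _ (norm_inner_le_of_mem_ball w hz)

end Kernel

theorem isProbabilityMeasure (S : BallFunctionSpace N t μ)
    (hμ : ∀ᵐ z ∂μ, z ∈ Ball N) : IsProbabilityMeasure μ := by
  have h0 : (0 : EuclideanSpace ℂ (Fin N)) ∈ Ball N := mem_ball_self one_pos
  have hlim := S.inner_eq (S.kernel 0) (S.kernel 0)
  have hconst : ∀ᶠ r : ℝ in 𝓝[<] 1, ∫ z, (starRingEnd ℂ) (S.eval (S.kernel 0) (r • z)) *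
      S.eval (S.kernel 0) (r • z) ∂μ = μ.real univ := by
    filter_upwards [Ioo_mem_nhdsLT one_pos] with r hr
    rw [integral_congr_ae (g := fun _ ↦ (1 : ℂ)), integral_const, Complex.real_smul, mul_one]
    filter_upwards [hμ] with z hz
    rw [S.eval_kernel 0 h0 _ (smul_mem_ball (Ioo_subset_Icc_self hr) hz), inner_zero_left, sub_zero,
      Complex.one_cpow, map_one, one_mul]
  have huniv : (μ.real univ : ℂ) = 1 := by
    rw [tendsto_nhds_unique (tendsto_const_nhds.congr' (hconst.mono fun _ ↦ Eq.symm)) hlim,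
      S.inner_kernel_kernel h0 h0, inner_zero_left, sub_zero, Complex.one_cpow]
  exact ⟨(ENNReal.toReal_eq_one_iff _).1 (Complex.ofReal_eq_one.1 huniv)⟩

section Dilates

variable (f : S.H)

theorem continuousAt_eval {z : EuclideanSpace ℂ (Fin N)} (hz : z ∈ Ball N) :
    ContinuousAt (S.eval f) z :=
  (S.holo f).continuousOn.continuousAt (isOpen_ball.mem_nhds hz)

theorem continuousOn_eval_smul {r : ℝ} (hr : r ∈ Icc (0 : ℝ) 1) :
    ContinuousOn (fun z ↦ S.eval f (r • z)) (Ball N) :=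
  (S.holo f).continuousOn.comp (by fun_prop) fun _ hz ↦ smul_mem_ball hr hz

theorem tendsto_eval_smul {z : EuclideanSpace ℂ (Fin N)} (hz : z ∈ Ball N) :
    Tendsto (fun r : ℝ ↦ S.eval f (r • z)) (𝓝 1) (𝓝 (S.eval f z)) := by
  have hsmul : Tendsto (fun r : ℝ ↦ r • z) (𝓝 1) (𝓝 z) :=
    (Continuous.tendsto' (by fun_prop) 1 z (one_smul ℝ z))
  exact (S.continuousAt_eval f hz).tendsto.comp hsmul

theorem exists_norm_eval_smul_le {r : ℝ} (hr : r ∈ Ico (0 : ℝ) 1) :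
    ∃ C, ∀ z ∈ Ball N, ‖S.eval f (r • z)‖ ≤ C := by
  obtain ⟨C, hC⟩ := (isCompact_closedBall 0 r).exists_bound_of_continuousOn
    ((S.holo f).continuousOn.mono (closedBall_subset_ball hr.2))
  refine ⟨C, fun z hz ↦ hC _ (mem_closedBall_zero_iff.2 ?_)⟩
  rw [norm_smul, Real.norm_of_nonneg hr.1]
  exact mul_le_of_le_one_right hr.1 (mem_ball_zero_iff.1 hz).le

theorem memLp_eval_smul (hμ : ∀ᵐ z ∂μ, z ∈ Ball N) {r : ℝ} (hr : r ∈ Ico (0 : ℝ) 1) :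
    MemLp (fun z ↦ S.eval f (r • z)) 2 μ := by
  have := S.isProbabilityMeasure hμ
  obtain ⟨C, hC⟩ := S.exists_norm_eval_smul_le f hr
  exact .of_bound (aestronglyMeasurable_of_continuousOn_ball hμ
    (S.continuousOn_eval_smul f (Ico_subset_Icc_self hr))) C (hμ.mono hC)

theorem tendsto_eLpNorm_eval_smul (hμ : ∀ᵐ z ∂μ, z ∈ Ball N) :
    Tendsto (fun r : ℝ ↦ eLpNorm (fun z ↦ S.eval f (r • z)) 2 μ) (𝓝[<] 1)
      (𝓝 (ENNReal.ofReal ‖f‖)) := by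
  rw [norm_eq_sqrt_re_inner (𝕜 := ℂ)]
  refine (ENNReal.tendsto_ofReal ((Complex.continuous_re.tendsto _).comp
    (S.inner_eq f f)).sqrt).congr' ?_
  filter_upwards [Ioo_mem_nhdsLT one_pos] with r hr
  exact (eLpNorm_two_eq_ofReal_sqrt_re_integral
    (S.memLp_eval_smul f hμ (Ioo_subset_Ico_self hr))).symm

theorem eLpNorm_eval_le (hμ : ∀ᵐ z ∂μ, z ∈ Ball N) :
    eLpNorm (S.eval f) 2 μ ≤ ENNReal.ofReal ‖f‖ := by
  obtain ⟨r, -, hr, hr1⟩ := exists_seq_strictMono_tendsto' (zero_lt_one (α := ℝ))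
  have hr1' : Tendsto r atTop (𝓝[<] 1) :=
    tendsto_nhdsWithin_iff.2 ⟨hr1, .of_forall fun n ↦ (hr n).2⟩
  calc eLpNorm (S.eval f) 2 μ
      ≤ liminf (fun n ↦ eLpNorm (fun z ↦ S.eval f (r n • z)) 2 μ) atTop :=
        Lp.eLpNorm_lim_le_liminf_eLpNorm
          (fun n ↦ (S.memLp_eval_smul f hμ (Ioo_subset_Ico_self (hr n))).1) _
          (hμ.mono fun z hz ↦ (S.tendsto_eval_smul f hz).comp hr1)
    _ = ENNReal.ofReal ‖f‖ := ((S.tendsto_eLpNorm_eval_smul f hμ).comp hr1').liminf_eq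

theorem memLp_eval (hμ : ∀ᵐ z ∂μ, z ∈ Ball N) : MemLp (S.eval f) 2 μ :=
  ⟨aestronglyMeasurable_of_continuousOn_ball hμ (S.holo f).continuousOn,
    (S.eLpNorm_eval_le f hμ).trans_lt ENNReal.ofReal_lt_top⟩

theorem tendsto_integral_eval_smul (hμ : ∀ᵐ z ∂μ, z ∈ Ball N)
    {φ : EuclideanSpace ℂ (Fin N) → ℂ} (hφ : Integrable φ μ) {f g : S.H}
    (hf : ∃ C, ∀ z ∈ Ball N, ‖S.eval f z‖ ≤ C) (hg : ∃ C, ∀ z ∈ Ball N, ‖S.eval g z‖ ≤ C) :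
    Tendsto (fun r : ℝ ↦ ∫ z, (starRingEnd ℂ) (S.eval f (r • z)) * φ z * S.eval g (r • z) ∂μ)
      (𝓝[<] 1) (𝓝 (∫ z, (starRingEnd ℂ) (S.eval f z) * φ z * S.eval g z ∂μ)) := by
  obtain ⟨C, hC⟩ := hf
  obtain ⟨C', hC'⟩ := hg
  refine tendsto_integral_filter_of_dominated_convergence (fun z ↦ C * ‖φ z‖ * C') ?_ ?_
    ((hφ.norm.const_mul C).mul_const C') ?_
  · filter_upwards [Ioo_mem_nhdsLT one_pos] with r hr
    have hmeas (f : S.H) : AEStronglyMeasurable (fun z ↦ S.eval f (r • z)) μ :=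
      aestronglyMeasurable_of_continuousOn_ball hμ
        (S.continuousOn_eval_smul f (Ioo_subset_Icc_self hr))
    exact ((Complex.continuous_conj.comp_aestronglyMeasurable (hmeas f)).mul hφ.1).mul (hmeas g)
  · filter_upwards [Ioo_mem_nhdsLT one_pos] with r hr
    filter_upwards [hμ] with z hz
    have hrz := smul_mem_ball (Ioo_subset_Icc_self hr) hz
    rw [norm_mul, norm_mul, RCLike.norm_conj]
    have hCnn : 0 ≤ C := (norm_nonneg _).trans (hC _ hrz)
    gcongr
    exacts [hC _ hrz, hC' _ hrz]
  · filter_upwards [hμ] with z hz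
    have hlim (f : S.H) := (S.tendsto_eval_smul f hz).mono_left (nhdsWithin_le_nhds (s := Iio 1))
    exact (((Complex.continuous_conj.tendsto _).comp (hlim f)).mul_const _).mul (hlim g)

end Dilates

section EmbeddingL2

variable (hμ : ∀ᵐ z ∂μ, z ∈ Ball N)

/-- The bounded inclusion of `S` into `L²(μ)`; it is shown to be isometric in `toL2` below. -/
def inclusionL2 : S.H →L[ℂ] Lp ℂ 2 μ :=
  LinearMap.mkContinuous
    { toFun := fun f ↦ (S.memLp_eval f hμ).toLp
      map_add' := fun f g ↦ by
        rw [← MemLp.toLp_add]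
        exact MemLp.toLp_congr _ _ (.of_forall fun z ↦ S.eval_add f g z)
      map_smul' := fun c f ↦ by
        rw [RingHom.id_apply, ← MemLp.toLp_const_smul]
        exact MemLp.toLp_congr _ _ (.of_forall fun z ↦ S.eval_smul c f z) }
    1 fun f ↦ by
      change ‖(S.memLp_eval f hμ).toLp‖ ≤ 1 * ‖f‖
      rw [Lp.norm_toLp, one_mul]
      exact ENNReal.toReal_le_of_le_ofReal (norm_nonneg f) (S.eLpNorm_eval_le f hμ)

theorem coeFn_inclusionL2 (f : S.H) : S.inclusionL2 hμ f =ᵐ[μ] S.eval f :=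
  (S.memLp_eval f hμ).coeFn_toLp

variable {S} in
theorem IsToeplitzOperator.eq_adjoint_comp_mulL2_comp {φ : EuclideanSpace ℂ (Fin N) → ℂ}
    {T : S.H →L[ℂ] S.H} (hT : S.IsToeplitzOperator φ T) (hφ : MemLp φ ⊤ μ) :
    T = (S.inclusionL2 hμ).adjoint ∘L mulL2 hφ ∘L S.inclusionL2 hμ := by
  have := S.isProbabilityMeasure hμ
  refine S.clm_ext_inner_kernel fun u hu w hw ↦ ?_
  rw [ContinuousLinearMap.comp_apply, ContinuousLinearMap.adjoint_inner_right,
    ContinuousLinearMap.comp_apply, inner_mulL2]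
  refine tendsto_nhds_unique (hT _ _) ?_
  convert S.tendsto_integral_eval_smul hμ (hφ.integrable le_top)
    (S.exists_norm_eval_kernel_le hu) (S.exists_norm_eval_kernel_le hw) using 2
  refine integral_congr_ae ?_
  filter_upwards [S.coeFn_inclusionL2 hμ (S.kernel u), S.coeFn_inclusionL2 hμ (S.kernel w)]
    with z hu hw
  rw [hu, hw]

theorem adjoint_inclusionL2_comp_self :
    (S.inclusionL2 hμ).adjoint ∘L S.inclusionL2 hμ = 1 := by
  have := S.isProbabilityMeasure hμ
  have hone : S.IsToeplitzOperator (fun _ ↦ 1) 1 := fun u v ↦ by simpa using S.inner_eq v u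
  rw [hone.eq_adjoint_comp_mulL2_comp hμ (memLp_top_const 1), mulL2_const, map_one]
  rfl

/-- The isometric embedding of `S` into `L²(μ)`. -/
def toL2 : S.H →ₗᵢ[ℂ] Lp ℂ 2 μ where
  toLinearMap := S.inclusionL2 hμ
  norm_map' := (S.inclusionL2 hμ).norm_map_iff_adjoint_comp_self.2
    (S.adjoint_inclusionL2_comp_self hμ)

theorem coeFn_toL2 (f : S.H) : S.toL2 hμ f =ᵐ[μ] S.eval f :=
  S.coeFn_inclusionL2 hμ f

variable {S} in
theorem IsToeplitzOperator.eq_toeplitz {φ : EuclideanSpace ℂ (Fin N) → ℂ}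
    {T : S.H →L[ℂ] S.H} (hT : S.IsToeplitzOperator φ T) (hφ : MemLp φ ⊤ μ) :
    T = toeplitz (S.toL2 hμ) (mulL2 hφ) :=
  hT.eq_adjoint_comp_mulL2_comp hμ hφ

theorem coeFn_toL2_kernel {w : EuclideanSpace ℂ (Fin N)} (hw : w ∈ Ball N) :
    S.toL2 hμ (S.kernel w) =ᵐ[μ] fun z ↦ (1 - ⟪w, z⟫) ^ (-t : ℂ) := by
  filter_upwards [S.coeFn_toL2 hμ (S.kernel w), hμ] with z heval hz
  rw [heval, S.eval_kernel w hw z hz]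

end EmbeddingL2

theorem inner_eq_integral (hμ : ∀ᵐ z ∂μ, z ∈ Ball N) (f g : S.H) :
    ⟪f, g⟫ = ∫ z, (starRingEnd ℂ) (S.eval f z) * S.eval g z ∂μ := by
  rw [← (S.toL2 hμ).inner_map_map, L2.inner_def]
  refine integral_congr_ae ?_
  filter_upwards [S.coeFn_toL2 hμ f, S.coeFn_toL2 hμ g] with z hf hg
  rw [hf, hg, RCLike.inner_apply, mul_comm]

section Dilation

/-- The operator `f ↦ f(r ·)` for `0 ≤ r < 1`, written as an average of rank-one operators; in this
form it is visibly compact and continuous in `r`. -/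
def dilation (r : ℝ) : S.H →L[ℂ] S.H :=
  ∫ z, InnerProductSpace.rankOne ℂ (S.kernel (√r • z)) (S.kernel (√r • z)) ∂μ

theorem isCompactOperator_dilation (r : ℝ) : IsCompactOperator (S.dilation r) :=
  isCompactOperator_integral (.of_forall fun _ ↦ isCompactOperator_rankOne _ _)

theorem exists_norm_rankOne_kernel_le {ρ : ℝ} (hρ : ρ < 1) :
    ∃ C, ∀ r ≤ ρ, ∀ z ∈ Ball N,
      ‖InnerProductSpace.rankOne ℂ (S.kernel (√r • z)) (S.kernel (√r • z))‖ ≤ C := by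
  have hsqrt : √ρ < 1 := (Real.sqrt_lt' one_pos).2 (hρ.trans_eq (one_pow 2).symm)
  obtain ⟨C, hC⟩ := S.exists_norm_kernel_le hsqrt
  refine ⟨C * C, fun r hr z hz ↦ ?_⟩
  have hbound : ‖S.kernel (√r • z)‖ ≤ C := by
    refine hC _ ?_
    rw [norm_smul, Real.norm_of_nonneg (Real.sqrt_nonneg r)]
    exact (mul_le_of_le_one_right (Real.sqrt_nonneg r) (mem_ball_zero_iff.1 hz).le).trans
      (Real.sqrt_le_sqrt hr)
  rw [InnerProductSpace.norm_rankOne]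
  exact mul_self_le_mul_self (norm_nonneg _) hbound

theorem sqrt_mem_Icc {r : ℝ} (hr : r ≤ 1) : √r ∈ Icc (0 : ℝ) 1 :=
  ⟨Real.sqrt_nonneg r, Real.sqrt_le_one.2 hr⟩

theorem aestronglyMeasurable_rankOne_kernel (hμ : ∀ᵐ z ∂μ, z ∈ Ball N) {r : ℝ} (hr : r ≤ 1) :
    AEStronglyMeasurable
      (fun z ↦ InnerProductSpace.rankOne ℂ (S.kernel (√r • z)) (S.kernel (√r • z))) μ :=
  aestronglyMeasurable_of_continuousOn_ball hμ (continuous_rankOne_self.comp_continuousOn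
    (S.continuousOn_kernel.comp (by fun_prop) fun _ hz ↦ smul_mem_ball (sqrt_mem_Icc hr) hz))

theorem integrable_rankOne_kernel (hμ : ∀ᵐ z ∂μ, z ∈ Ball N) {r : ℝ} (hr : r < 1) :
    Integrable (fun z ↦ InnerProductSpace.rankOne ℂ (S.kernel (√r • z)) (S.kernel (√r • z))) μ := by
  have := S.isProbabilityMeasure hμ
  obtain ⟨C, hC⟩ := S.exists_norm_rankOne_kernel_le hr
  exact .of_bound (S.aestronglyMeasurable_rankOne_kernel hμ hr.le) C
    (hμ.mono fun z hz ↦ hC r le_rfl z hz)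

theorem exists_norm_dilation_le (hμ : ∀ᵐ z ∂μ, z ∈ Ball N) {ρ : ℝ} (hρ : ρ < 1) :
    ∃ C, ∀ r ≤ ρ, ‖S.dilation r‖ ≤ C := by
  have := S.isProbabilityMeasure hμ
  obtain ⟨C, hC⟩ := S.exists_norm_rankOne_kernel_le hρ
  refine ⟨C, fun r hr ↦ (norm_integral_le_of_norm_le_const (hμ.mono (hC r hr))).trans_eq ?_⟩
  rw [probReal_univ, mul_one]

theorem continuousAt_dilation (hμ : ∀ᵐ z ∂μ, z ∈ Ball N) {r : ℝ} (hr : r < 1) :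
    ContinuousAt S.dilation r := by
  have := S.isProbabilityMeasure hμ
  obtain ⟨ρ, hrρ, hρ⟩ := exists_between hr
  obtain ⟨C, hC⟩ := S.exists_norm_rankOne_kernel_le hρ
  have hnear : ∀ᶠ r' in 𝓝 r, r' ≤ ρ := (eventually_lt_nhds hrρ).mono fun _ ↦ le_of_lt
  refine continuousAt_of_dominated (bound := fun _ ↦ C)
    (hnear.mono fun r' hr' ↦ S.aestronglyMeasurable_rankOne_kernel hμ (hr'.trans hρ.le))
    (hnear.mono fun r' hr' ↦ hμ.mono (hC r' hr')) (integrable_const C) ?_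
  filter_upwards [hμ] with z hz
  have hkernel : ContinuousAt S.kernel (√r • z) := S.continuousOn_kernel.continuousAt
    (isOpen_ball.mem_nhds (smul_mem_ball (sqrt_mem_Icc hr.le) hz))
  exact continuous_rankOne_self.continuousAt.comp
    (ContinuousAt.comp (f := fun r' : ℝ ↦ √r' • z) hkernel (by fun_prop))

theorem dilation_kernel (hμ : ∀ᵐ z ∂μ, z ∈ Ball N) {r : ℝ} (hr : r ∈ Ico (0 : ℝ) 1)
    {w : EuclideanSpace ℂ (Fin N)} (hw : w ∈ Ball N) :
    S.dilation r (S.kernel w) = S.kernel (r • w) := by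
  have hint := S.integrable_rankOne_kernel hμ hr.2
  have hsqrt := sqrt_mem_Icc hr.2.le
  refine S.ext_inner_kernel fun u hu ↦ ?_
  calc ⟪S.kernel u, S.dilation r (S.kernel w)⟫
      = ∫ z, ⟪S.kernel u, S.kernel (√r • z)⟫ * ⟪S.kernel (√r • z), S.kernel w⟫ ∂μ := by
        rw [dilation, ContinuousLinearMap.integral_apply hint,
          ← integral_inner (hint.apply_continuousLinearMap _)]
        simp only [InnerProductSpace.inner_right_rankOne_apply]
    _ = ∫ z, (starRingEnd ℂ) (S.eval (S.kernel (√r • u)) z) * S.eval (S.kernel (√r • w)) z ∂μ := by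
        refine integral_congr_ae ?_
        filter_upwards [hμ] with z hz
        rw [← S.reproducing _ z hz, ← S.reproducing _ z hz, inner_conj_symm,
          S.inner_kernel_smul_left hsqrt hz hw, S.inner_kernel_smul_left hsqrt hu hz, mul_comm]
    _ = ⟪S.kernel u, S.kernel (r • w)⟫ := by
        rw [← S.inner_eq_integral hμ, S.inner_kernel_smul_left hsqrt hu (smul_mem_ball hsqrt hw),
          smul_smul, Real.mul_self_sqrt hr.1]

theorem isSelfAdjoint_dilation (hμ : ∀ᵐ z ∂μ, z ∈ Ball N) {r : ℝ} (hr : r ∈ Ico (0 : ℝ) 1) :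
    IsSelfAdjoint (S.dilation r) := by
  refine S.clm_ext_inner_kernel fun u hu w hw ↦ ?_
  rw [ContinuousLinearMap.star_eq_adjoint, ContinuousLinearMap.adjoint_inner_right,
    S.dilation_kernel hμ hr hu, S.dilation_kernel hμ hr hw,
    S.inner_kernel_smul_left (Ico_subset_Icc_self hr) hu hw]

theorem dilation_mul (hμ : ∀ᵐ z ∂μ, z ∈ Ball N) {r r' : ℝ} (hr : r ∈ Ico (0 : ℝ) 1)
    (hr' : r' ∈ Ico (0 : ℝ) 1) :
    S.dilation r * S.dilation r' = S.dilation (r * r') := by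
  refine S.clm_ext_kernel fun w hw ↦ ?_
  have hmul : r * r' ∈ Ico (0 : ℝ) 1 :=
    ⟨mul_nonneg hr.1 hr'.1, mul_lt_one_of_nonneg_of_lt_one_left hr.1 hr.2 hr'.2.le⟩
  rw [mul_apply_eq_comp, S.dilation_kernel hμ hr' hw,
    S.dilation_kernel hμ hr (smul_mem_ball (Ico_subset_Icc_self hr') hw),
    S.dilation_kernel hμ hmul hw, smul_smul]

theorem dilation_pow (hμ : ∀ᵐ z ∂μ, z ∈ Ball N) {r : ℝ} (hr : r ∈ Ico (0 : ℝ) 1) (n : ℕ) :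
    S.dilation r ^ (n + 1) = S.dilation (r ^ (n + 1)) := by
  induction n with
  | zero => rw [zero_add, pow_one, pow_one]
  | succ n ih =>
    have hpow : r ^ (n + 1) ∈ Ico (0 : ℝ) 1 :=
      ⟨pow_nonneg hr.1 _, pow_lt_one₀ hr.1 hr.2 n.succ_ne_zero⟩
    rw [pow_succ, ih, S.dilation_mul hμ hpow hr, ← pow_succ]

theorem norm_dilation_le_one (hμ : ∀ᵐ z ∂μ, z ∈ Ball N) {r : ℝ} (hr : r ∈ Ico (0 : ℝ) 1) :
    ‖S.dilation r‖ ≤ 1 := by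
  obtain ⟨C, hC⟩ := S.exists_norm_dilation_le hμ hr.2
  refine norm_le_one_of_isSelfAdjoint_of_norm_pow_le (S.isSelfAdjoint_dilation hμ hr) (C := C)
    fun n ↦ ?_
  rw [S.dilation_pow hμ hr]
  exact hC _ (pow_le_of_le_one hr.1 hr.2.le n.succ_ne_zero)

end Dilation

section Defect

/-- The compact operator with kernel `(1 - ⟪w, z⟫) ^ (1 - t)`. It is the defect `1 - ∑ T_j T_j*` of
the tuple of coordinate Toeplitz operators, which measures how far multiplication by the coordinates
is from being a spherical isometry. -/
def defect : S.H →L[ℂ] S.H :=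
  ∫ r in Ioo (0 : ℝ) 1, ((t - 1) * r ^ (t - 2)) • S.dilation r

theorem integrableOn_smul_dilation (hμ : ∀ᵐ z ∂μ, z ∈ Ball N) (ht : 1 < t) :
    IntegrableOn (fun r : ℝ ↦ ((t - 1) * r ^ (t - 2)) • S.dilation r) (Ioo 0 1) := by
  have hweight : IntegrableOn (fun r : ℝ ↦ (t - 1) * r ^ (t - 2)) (Ioo 0 1) :=
    (intervalIntegral.integrableOn_Ioo_rpow_iff one_pos |>.2 (by linarith)).const_mul (t - 1)
  refine hweight.smul_bdd 1 ?_ ?_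
  · exact ContinuousOn.aestronglyMeasurable
      (fun r hr ↦ (S.continuousAt_dilation hμ hr.2).continuousWithinAt) measurableSet_Ioo
  · filter_upwards [ae_restrict_mem measurableSet_Ioo] with r hr
    exact S.norm_dilation_le_one hμ (Ioo_subset_Ico_self hr)

theorem inner_kernel_defect_kernel (hμ : ∀ᵐ z ∂μ, z ∈ Ball N) (ht : 1 < t)
    {u w : EuclideanSpace ℂ (Fin N)} (hu : u ∈ Ball N) (hw : w ∈ Ball N) :
    ⟪S.kernel u, S.defect (S.kernel w)⟫ = (1 - ⟪w, u⟫) ^ (1 - t : ℂ) := by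
  have hint := S.integrableOn_smul_dilation hμ ht
  rw [defect, ContinuousLinearMap.integral_apply hint,
    ← integral_inner (hint.apply_continuousLinearMap _),
    ← integral_rpow_mul_one_sub_mul_cpow ht (norm_inner_lt_one hw hu)]
  refine setIntegral_congr_fun measurableSet_Ioo fun r hr ↦ ?_
  simp only [_root_.smul_apply]
  rw [S.dilation_kernel hμ (Ioo_subset_Ico_self hr) hw, ← Complex.coe_smul, inner_smul_right,
    S.inner_kernel_kernel hu (smul_mem_ball (Ioo_subset_Icc_self hr) hw), inner_real_smul_left]

theorem coeFn_toL2_defect_kernel (hμ : ∀ᵐ z ∂μ, z ∈ Ball N) (ht : 1 < t)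
    {w : EuclideanSpace ℂ (Fin N)} (hw : w ∈ Ball N) :
    S.toL2 hμ (S.defect (S.kernel w)) =ᵐ[μ] fun z ↦ (1 - ⟪w, z⟫) ^ (1 - t : ℂ) := by
  filter_upwards [S.coeFn_toL2 hμ (S.defect (S.kernel w)), hμ] with z heval hz
  rw [heval, ← S.reproducing _ z hz, S.inner_kernel_defect_kernel hμ ht hz hw]

end Defect

theorem isCompactOperator_defect : IsCompactOperator S.defect :=
  isCompactOperator_integral (.of_forall fun r ↦ (S.isCompactOperator_dilation r).smul _)

theorem ae_mem_closedBall (hμ : ∀ᵐ z ∂μ, z ∈ Ball N) : ∀ᵐ z ∂μ, z ∈ closedBall 0 1 :=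
  hμ.mono fun _ hz ↦ ball_subset_closedBall hz

section Translation

variable (w z : EuclideanSpace ℂ (Fin N)) (j : Fin N)

theorem inner_add_smul_single_left (ε : ℝ) :
    ⟪w + ε • EuclideanSpace.single j (1 : ℂ), z⟫ = ⟪w, z⟫ + ε * z j := by
  rw [inner_add_left, inner_real_smul_left, EuclideanSpace.inner_single_left, map_one, one_mul]

theorem eventually_add_smul_single_mem_ball {w : EuclideanSpace ℂ (Fin N)} (hw : w ∈ Ball N) :
    ∀ᶠ ε : ℝ in 𝓝 0, w + ε • EuclideanSpace.single j (1 : ℂ) ∈ Ball N :=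
  (show ContinuousAt (fun ε : ℝ ↦ w + ε • EuclideanSpace.single j (1 : ℂ)) 0 by
    fun_prop).eventually_mem (isOpen_ball.mem_nhds (by rwa [zero_smul, add_zero]))

end Translation

section Coordinates

theorem memLp_coord (hμ : ∀ᵐ z ∂μ, z ∈ Ball N) (j : Fin N) :
    MemLp (fun z : EuclideanSpace ℂ (Fin N) ↦ z j) ⊤ μ :=
  memLp_top_of_continuousOn (isCompact_closedBall 0 1) measurableSet_closedBall
    (ae_mem_closedBall hμ) (f := fun z : EuclideanSpace ℂ (Fin N) ↦ z j) (by fun_prop)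

/-- Multiplication by the coordinate function `z ↦ z j` on `L²(μ)`. -/
def mulCoord (hμ : ∀ᵐ z ∂μ, z ∈ Ball N) (j : Fin N) : Lp ℂ 2 μ →L[ℂ] Lp ℂ 2 μ :=
  mulL2 (memLp_coord hμ j)

theorem sum_norm_star_mulCoord_sq_le (hμ : ∀ᵐ z ∂μ, z ∈ Ball N) (F : Lp ℂ 2 μ) :
    ∑ j, ‖star (mulCoord hμ j) F‖ ^ 2 ≤ ‖F‖ ^ 2 := by
  simp only [mulCoord, star_mulL2]
  refine sum_norm_mulL2_sq_le (fun j ↦ (memLp_coord hμ j).star) ?_ F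
  filter_upwards [hμ] with z hz
  simp only [Pi.star_apply, norm_star]
  rw [← EuclideanSpace.norm_sq_eq]
  exact pow_le_one₀ (norm_nonneg z) (mem_ball_zero_iff.1 hz).le

variable (hμ : ∀ᵐ z ∂μ, z ∈ Ball N)

-- `∂/∂(conj w_j) (1 - ⟪w, z⟫) ^ (1 - t) = (t - 1) z_j (1 - ⟪w, z⟫) ^ (-t)`: differentiating the
-- kernel of the defect in `w` produces the products `z_j K_w`.
theorem hasDerivAt_inner_toL2_defect_kernel (ht : 1 < t) (j : Fin N) (g : Lp ℂ 2 μ)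
    {w : EuclideanSpace ℂ (Fin N)} (hw : w ∈ Ball N) :
    HasDerivAt
      (fun ε : ℝ ↦ ⟪g, S.toL2 hμ (S.defect (S.kernel (w + ε • EuclideanSpace.single j (1 : ℂ))))⟫)
      ((t - 1) * ⟪g, mulCoord hμ j (S.toL2 hμ (S.kernel w))⟫) 0 := by
  have := S.isProbabilityMeasure hμ
  have hg : Integrable (fun z ↦ (starRingEnd ℂ) (g z)) μ :=
    Complex.conjCLE.toContinuousLinearMap.integrable_comp ((Lp.memLp g).integrable one_le_two)
  have hcoord : ∀ᵐ z ∂μ, ‖z j‖ ≤ 1 := hμ.mono fun z hz ↦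
    (PiLp.norm_apply_le z j).trans (mem_ball_zero_iff.1 hz).le
  have hderiv := hasDerivAt_integral_mul_one_sub_cpow hg (a := fun z ↦ ⟪w, z⟫) (b := fun z ↦ z j)
    (by fun_prop) (memLp_coord hμ j).1 (mem_ball_zero_iff.1 hw)
    (hμ.mono fun z hz ↦ norm_inner_le_of_mem_ball w hz) hcoord (1 - t)
  rw [← Complex.ofReal_zero] at hderiv
  refine (hderiv.comp_ofReal.congr_of_eventuallyEq ?_).congr_deriv ?_
  · filter_upwards [eventually_add_smul_single_mem_ball j hw] with ε hε
    rw [L2.inner_def]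
    refine integral_congr_ae ?_
    filter_upwards [S.coeFn_toL2_defect_kernel hμ ht hε] with z hz
    rw [hz, RCLike.inner_apply, inner_add_smul_single_left, mul_comm]
  · rw [mulCoord, inner_mulL2, ← integral_const_mul]
    refine integral_congr_ae ?_
    filter_upwards [S.coeFn_toL2_kernel hμ hw] with z hz
    rw [hz, show (1 - t - 1 : ℂ) = -t by ring]
    ring

theorem hankel_mulCoord (ht : 1 < t) (j : Fin N) : hankel (S.toL2 hμ) (mulCoord hμ j) = 0 := by
  have ht' : (t - 1 : ℂ) ≠ 0 := mod_cast (sub_pos.2 ht).ne'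
  refine S.clm_ext_kernel fun w hw ↦ hankel_apply_eq_zero _ fun g hg ↦ ?_
  have hderiv := S.hasDerivAt_inner_toL2_defect_kernel hμ ht j g hw
  simp only [hg] at hderiv
  exact (mul_eq_zero.1 (hderiv.unique (hasDerivAt_const 0 0))).resolve_left ht'

theorem inner_kernel_toeplitz_mulCoord_kernel (ht : 1 < t) (j : Fin N)
    {u w : EuclideanSpace ℂ (Fin N)} (hu : u ∈ Ball N) (hw : w ∈ Ball N) :
    ⟪S.kernel u, toeplitz (S.toL2 hμ) (mulCoord hμ j) (S.kernel w)⟫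
      = u j * ⟪S.kernel u, S.kernel w⟫ := by
  have ht' : (t - 1 : ℂ) ≠ 0 := mod_cast (sub_pos.2 ht).ne'
  have hinner : HasDerivAt (fun ε : ℝ ↦ ⟪w, u⟫ + ε * u j) (u j) 0 :=
    ((hasDerivAt_mul_const (u j)).const_add ⟪w, u⟫).comp_ofReal
  have hcpow := (hasDerivAt_one_sub_cpow (norm_inner_lt_one hw hu) (1 - t)).comp_of_eq 0 hinner
    (by rw [Complex.ofReal_zero, zero_mul, add_zero])
  have hderiv := S.hasDerivAt_inner_toL2_defect_kernel hμ ht j (S.toL2 hμ (S.kernel u)) hw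
  have heq := hderiv.unique (hcpow.congr_of_eventuallyEq ?_)
  · rw [inner_toeplitz]
    refine mul_left_cancel₀ ht' (heq.trans ?_)
    rw [S.inner_kernel_kernel hu hw, show (1 - t - 1 : ℂ) = -t by ring]
    ring
  · filter_upwards [eventually_add_smul_single_mem_ball j hw] with ε hε
    rw [(S.toL2 hμ).inner_map_map, S.inner_kernel_defect_kernel hμ ht hu hε,
      inner_add_smul_single_left, Function.comp_apply]

theorem adjoint_toeplitz_mulCoord_kernel (ht : 1 < t) (j : Fin N) {w : EuclideanSpace ℂ (Fin N)}
    (hw : w ∈ Ball N) :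
    (toeplitz (S.toL2 hμ) (mulCoord hμ j)).adjoint (S.kernel w)
      = (starRingEnd ℂ) (w j) • S.kernel w := by
  refine S.ext_inner_kernel fun u hu ↦ ?_
  rw [ContinuousLinearMap.adjoint_inner_right, ← inner_conj_symm,
    S.inner_kernel_toeplitz_mulCoord_kernel hμ ht j hw hu, map_mul, inner_conj_symm,
    inner_smul_right]

theorem defect_eq_one_sub_sum (ht : 1 < t) :
    S.defect = 1 - ∑ j, toeplitz (S.toL2 hμ) (mulCoord hμ j) ∘L
      (toeplitz (S.toL2 hμ) (mulCoord hμ j)).adjoint := by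
  refine S.clm_ext_inner_kernel fun u hu w hw ↦ ?_
  have hterm (j : Fin N) : ⟪S.kernel u, (toeplitz (S.toL2 hμ) (mulCoord hμ j) ∘L
      (toeplitz (S.toL2 hμ) (mulCoord hμ j)).adjoint) (S.kernel w)⟫
      = u j * (starRingEnd ℂ) (w j) * ⟪S.kernel u, S.kernel w⟫ := by
    rw [ContinuousLinearMap.comp_apply, S.adjoint_toeplitz_mulCoord_kernel hμ ht j hw, map_smul,
      inner_smul_right, S.inner_kernel_toeplitz_mulCoord_kernel hμ ht j hu hw]
    ring
  have hinner : ∑ j, u j * (starRingEnd ℂ) (w j) = ⟪w, u⟫ := by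
    simp only [PiLp.inner_apply, RCLike.inner_apply]
  have hne := Complex.slitPlane_ne_zero (one_sub_mem_slitPlane (norm_inner_lt_one hw hu))
  rw [_root_.sub_apply, _root_.sum_apply, inner_sub_right, inner_sum]
  simp only [hterm]
  rw [← Finset.sum_mul, hinner, one_apply_eq_self, S.inner_kernel_kernel hu hw,
    S.inner_kernel_defect_kernel hμ ht hu hw, ← one_sub_mul, sub_eq_add_neg (1 : ℂ) t,
    Complex.cpow_add _ _ hne, Complex.cpow_one]

theorem re_inner_defect_self (ht : 1 < t) (f : S.H) :
    (⟪f, S.defect f⟫).re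
      = ‖f‖ ^ 2 - ∑ j, ‖toeplitz (S.toL2 hμ) (star (mulCoord hμ j)) f‖ ^ 2 := by
  rw [S.defect_eq_one_sub_sum hμ ht, _root_.sub_apply, _root_.sum_apply, inner_sub_right, inner_sum,
    one_apply_eq_self, Complex.sub_re, Complex.re_sum]
  congr 1
  · exact inner_self_eq_norm_sq (𝕜 := ℂ) f
  · refine Finset.sum_congr rfl fun j _ ↦ ?_
    rw [ContinuousLinearMap.comp_apply, ← ContinuousLinearMap.adjoint_inner_left, adjoint_toeplitz]
    exact inner_self_eq_norm_sq (𝕜 := ℂ) _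

theorem norm_hankel_star_mulCoord_sq_le (ht : 1 < t) (j : Fin N) (f : S.H) :
    ‖hankel (S.toL2 hμ) (star (mulCoord hμ j)) f‖ ^ 2 ≤ ‖f‖ * ‖S.defect f‖ :=
  calc ‖hankel (S.toL2 hμ) (star (mulCoord hμ j)) f‖ ^ 2
      ≤ ∑ i, ‖hankel (S.toL2 hμ) (star (mulCoord hμ i)) f‖ ^ 2 :=
        Finset.single_le_sum (f := fun i ↦ ‖hankel (S.toL2 hμ) (star (mulCoord hμ i)) f‖ ^ 2)
          (fun i _ ↦ sq_nonneg _) (Finset.mem_univ j)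
    _ = ∑ i, ‖star (mulCoord hμ i) (S.toL2 hμ f)‖ ^ 2
          - ∑ i, ‖toeplitz (S.toL2 hμ) (star (mulCoord hμ i)) f‖ ^ 2 := by
        simp only [norm_hankel_apply_sq, Finset.sum_sub_distrib]
    _ ≤ ‖f‖ ^ 2 - ∑ i, ‖toeplitz (S.toL2 hμ) (star (mulCoord hμ i)) f‖ ^ 2 := by
        rw [← (S.toL2 hμ).norm_map f]
        gcongr
        exact sum_norm_star_mulCoord_sq_le hμ _
    _ = (⟪f, S.defect f⟫).re := (S.re_inner_defect_self hμ ht f).symm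
    _ ≤ ‖f‖ * ‖S.defect f‖ := re_inner_le_norm (𝕜 := ℂ) _ _

theorem mulCoord_mem_compactHankel (ht : 1 < t) (j : Fin N) :
    mulCoord hμ j ∈ compactHankel (S.toL2 hμ) := by
  refine ⟨?_, isCompactOperator_of_sq_norm_le S.isCompactOperator_defect
    (S.norm_hankel_star_mulCoord_sq_le hμ ht j)⟩
  rw [S.hankel_mulCoord hμ ht j]
  exact isCompactOperator_zero

end Coordinates

theorem isCompactOperator_hankel_mulL2 (hμ : ∀ᵐ z ∂μ, z ∈ Ball N) (ht : N < t)
    {h : EuclideanSpace ℂ (Fin N) → ℂ} (hh : ContinuousOn h (closedBall 0 1)) :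
    IsCompactOperator (hankel (S.toL2 hμ) (mulL2 (memLp_top_of_continuousOn
      (isCompact_closedBall 0 1) measurableSet_closedBall (ae_mem_closedBall hμ) hh))) := by
  have one_lt (j : Fin N) : 1 < t := (Nat.one_le_cast.2 j.pos).trans_lt ht
  refine (mulL2_mem_of_separatesPoints (isCompact_closedBall 0 1) measurableSet_closedBall
    (ae_mem_closedBall hμ) (isClosed_compactHankel (S.toL2 hμ)) (f := fun j z ↦ z j)
    (fun j ↦ by fun_prop) (fun x _ y _ hxy ↦ ?_)
    (fun j ↦ S.mulCoord_mem_compactHankel hμ (one_lt j) j) hh).1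
  contrapose! hxy
  exact PiLp.ext hxy

end BallFunctionSpace

theorem ae_mem_ball_bergmanMeasure (N : ℕ) (s : ℝ) : ∀ᵐ z ∂bergmanMeasure N s, z ∈ Ball N := by
  have hball : ∀ᵐ z ∂ballMeasure N, z ∈ Ball N :=
    Measure.ae_smul_measure (ae_restrict_mem measurableSet_ball) _
  exact (withDensity_absolutelyContinuous _ _).ae_le hball

/-- Let `s > -1`, let `b` be a bounded measurable function on the unit
ball `B_N`, and let `h` be continuous on the closed ball.  Then `T_b T_h - T_{bh}` is a
compact operator on the weighted Bergman space `A²_s(B_N)`. -/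
theorem toeplitz_semimultiplicative_compact_bergman
    (N : ℕ) (s : ℝ) (hs : -1 < s)
    (S : BallFunctionSpace N (N + s + 1) (bergmanMeasure N s))
    (b h : EuclideanSpace ℂ (Fin N) → ℂ)
    (hb : Measurable b) (hbb : ∃ M : ℝ, ∀ z ∈ Ball N, ‖b z‖ ≤ M)
    (hh : ContinuousOn h (Metric.closedBall 0 1))
    (Tb Th Tbh : S.H →L[ℂ] S.H)
    (hTb : S.IsToeplitzOperator b Tb) (hTh : S.IsToeplitzOperator h Th)
    (hTbh : S.IsToeplitzOperator (fun z => b z * h z) Tbh) :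
    IsCompactOperator ⇑(Tb.comp Th - Tbh) := by
  have hμ := ae_mem_ball_bergmanMeasure N s
  obtain ⟨M, hM⟩ := hbb
  have hbL : MemLp b ⊤ (bergmanMeasure N s) :=
    memLp_top_of_bound hb.aestronglyMeasurable M (hμ.mono hM)
  have hhL : MemLp h ⊤ (bergmanMeasure N s) := memLp_top_of_continuousOn (isCompact_closedBall 0 1)
    measurableSet_closedBall (BallFunctionSpace.ae_mem_closedBall hμ) hh
  have hHankel : IsCompactOperator (hankel (S.toL2 hμ) (mulL2 hhL)) :=
    S.isCompactOperator_hankel_mulL2 hμ (by linarith) hh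
  rw [hTb.eq_toeplitz hμ hbL, hTh.eq_toeplitz hμ hhL, hTbh.eq_toeplitz hμ (hhL.mul hbL),
    mulL2_mul hbL hhL, toeplitz_comp_toeplitz_sub_toeplitz_mul]
  exact (hHankel.clm_comp ((S.toL2 hμ).toContinuousLinearMap.adjoint ∘L mulL2 hbL)).neg
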